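/- arXiv:2006.07850 — 3 statements merged into one kernel-verified Lean document; each statement's English description precedes it below -/
import Mathlib

section
/- Let H be a Hilbert space over 𝕜 (𝕜 = ℝ or ℂ), and let T be a power-bounded operator on H of the form T = α·I + S with α ∈ 𝕜 and S^k compact for some k ≥ 1. If inf_{n ≥ 0} ‖Tⁿ x‖ > 0 for every x ≠ 0, then T is similar to a unitary operator: there exist an invertible bounded operator R on H and a unitary operator U on H such that T = R⁻¹ ∘ U ∘ R. -/
open Filter Topology

section aux
variable {𝕜 : Type*} [RCLike 𝕜] {H : Type*} [NormedAddCommGroup H] [InnerProductSpace 𝕜 H]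

theorem aux_wot [CompleteSpace H] (A : ℕ → H →L[𝕜] H) (C : ℝ) (hA : ∀ n, ‖A n‖ ≤ C) :
    ∃ B : H →L[𝕜] H, ∀ x y : H, Tendsto (fun n => inner 𝕜 (A n x) y)
      (hyperfilter ℕ : Filter ℕ) (𝓝 (inner 𝕜 (B x) y)) := by
  have hb : ∀ n x y, ‖inner 𝕜 (A n x) y‖ ≤ C * ‖x‖ * ‖y‖ := fun n x y =>
    (norm_inner_le_norm _ _).trans (mul_le_mul_of_nonneg_right
      ((A n).le_of_opNorm_le (hA n) x) (norm_nonneg _))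
  have key : ∀ x y : H, ∃ l : 𝕜, Tendsto (fun n => inner 𝕜 (A n x) y)
      (hyperfilter ℕ : Filter ℕ) (𝓝 l) := by
    intro x y
    have hc : IsCompact (Metric.closedBall (0:𝕜) (C * ‖x‖ * ‖y‖)) := isCompact_closedBall _ _
    obtain ⟨l, -, hl⟩ := hc.ultrafilter_le_nhds
      ((hyperfilter ℕ).map (fun n => inner 𝕜 (A n x) y)) (by
        exact tendsto_principal.2 (Filter.Eventually.of_forall fun n => by
          simpa using hb n x y))
    exact ⟨l, hl⟩
  choose L hL using key
  let L2 : H →ₗ⋆[𝕜] H →ₗ[𝕜] 𝕜 := LinearMap.mk₂'ₛₗ (starRingEnd 𝕜) (RingHom.id 𝕜) L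
    (fun a b y => tendsto_nhds_unique (hL (a+b) y) (by
      simpa [inner_add_left] using (hL a y).add (hL b y)))
    (fun c a y => tendsto_nhds_unique (hL (c • a) y) (by
      simpa [inner_smul_left] using (hL a y).const_mul (starRingEnd 𝕜 c)))
    (fun a y z => tendsto_nhds_unique (hL a (y+z)) (by
      simpa [inner_add_right] using (hL a y).add (hL a z)))
    (fun c a y => tendsto_nhds_unique (hL a (c • y)) (by
      simpa [inner_smul_right] using (hL a y).const_mul c))
  let L3 : H →L⋆[𝕜] H →L[𝕜] 𝕜 := L2.mkContinuous₂ C (fun x y =>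
    le_of_tendsto (hL x y).norm (Filter.Eventually.of_forall fun n => hb n x y))
  refine ⟨InnerProductSpace.continuousLinearMapOfBilin L3, fun x y => ?_⟩
  rw [InnerProductSpace.continuousLinearMapOfBilin_apply]
  exact hL x y

theorem aux_cesaro (f : ℕ → 𝕜) (D : ℝ) (hf : ∀ n, ‖f n‖ ≤ D) :
    Tendsto (fun n : ℕ => ((n:𝕜)+1)⁻¹ * ∑ j ∈ Finset.range (n+1), f (j+1)
      - ((n:𝕜)+1)⁻¹ * ∑ j ∈ Finset.range (n+1), f j)
      (hyperfilter ℕ : Filter ℕ) (𝓝 0) := by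
  have h1 : Tendsto (fun n : ℕ => ((1:ℝ) / ((n:ℝ)+1)) * (2*D)) atTop (𝓝 0) := by
    simpa using (tendsto_one_div_add_atTop_nhds_zero_nat (𝕜 := ℝ)).mul_const (2*D)
  refine Tendsto.mono_left ?_ Nat.hyperfilter_le_atTop
  refine squeeze_zero_norm (fun n => ?_) h1
  rw [← mul_sub, ← Finset.sum_sub_distrib, Finset.sum_range_sub, norm_mul, norm_inv]
  have : ‖(n:𝕜)+1‖ = (n:ℝ)+1 := by
    have := RCLike.norm_natCast (K := 𝕜) (n+1)
    push_cast at this; exact this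
  rw [this, one_div]
  gcongr
  exact (norm_sub_le _ _).trans (by linarith [hf (n+1), hf 0])

theorem aux_avg_norm (B : ℕ → H →L[𝕜] H) (D : ℝ) (hB : ∀ n, ‖B n‖ ≤ D) (n : ℕ) :
    ‖((n:𝕜)+1)⁻¹ • ∑ j ∈ Finset.range (n+1), B j‖ ≤ D := by
  have : ‖(n:𝕜)+1‖ = (n:ℝ)+1 := by
    have := RCLike.norm_natCast (K := 𝕜) (n+1)
    push_cast at this; exact this
  rw [norm_smul, norm_inv, this, inv_mul_le_iff₀ (by positivity)]
  refine (norm_sum_le_of_le _ (fun j _ => hB j)).trans ?_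
  simp

theorem aux_pow_norm {T : H →L[𝕜] H} {C : ℝ} (hC : ∀ n, ‖T^n‖ ≤ C) (n : ℕ) (x : H) :
    ‖(T^n) x‖ ≤ C * ‖x‖ := (T^n).le_of_opNorm_le (hC n) x

theorem aux_ergodic [CompleteSpace H] (T : H →L[𝕜] H) (C : ℝ) (hC : ∀ n, ‖T^n‖ ≤ C) (y : H)
    (hy : ∀ w, inner 𝕜 (T w) y = inner 𝕜 w y) (hfix : ∀ z, T z = z → inner 𝕜 z y = 0) : y = 0 := by
  obtain ⟨B, hB⟩ := aux_wot (fun n : ℕ => ((n:𝕜)+1)⁻¹ • ∑ j ∈ Finset.range (n+1), T^j) C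
    (aux_avg_norm _ C hC)
  have hform : ∀ (n : ℕ) (w : H), inner 𝕜 ((((n:𝕜)+1)⁻¹ • ∑ j ∈ Finset.range (n+1), T^j) y) w
      = ((n:𝕜)+1)⁻¹ * ∑ j ∈ Finset.range (n+1), inner 𝕜 ((T^j) y) w := by
    intro n w
    simp [inner_smul_left, sum_inner]
  have hfixB : T (B y) = B y := by
    refine ext_inner_right 𝕜 fun w => ?_
    have h1 := (hB y (ContinuousLinearMap.adjoint T w)).sub (hB y w)
    rw [ContinuousLinearMap.adjoint_inner_right] at h1
    have h2 := aux_cesaro (fun j => inner 𝕜 ((T^j) y) w) (C * ‖y‖ * ‖w‖) (fun n =>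
      (norm_inner_le_norm _ _).trans (mul_le_mul_of_nonneg_right (aux_pow_norm hC n y)
        (norm_nonneg _)))
    refine sub_eq_zero.1 (tendsto_nhds_unique h1 ?_)
    convert h2 using 2 with n
    rw [hform, hform]
    simp only [ContinuousLinearMap.adjoint_inner_right, pow_succ', mul_apply_eq_comp]
  have hpow : ∀ j : ℕ, inner 𝕜 ((T^j) y) y = inner 𝕜 y y := by
    intro j
    induction j with
    | zero => simp
    | succ j ih => rw [pow_succ', mul_apply_eq_comp, hy, ih]
  have h3 := hB y y
  rw [hfix _ hfixB] at h3
  have h4 : (inner 𝕜 y y : 𝕜) = 0 := by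
    refine tendsto_nhds_unique ?_ h3
    refine tendsto_const_nhds.congr fun n => ?_
    rw [hform]
    simp only [hpow]
    have : (n:𝕜)+1 ≠ 0 := by exact_mod_cast Nat.succ_ne_zero n
    simp [field]
  exact inner_self_eq_zero.1 h4

theorem aux_form [CompleteSpace H] (T : H →L[𝕜] H) (C : ℝ) (hC0 : 0 < C) (hC : ∀ n, ‖T^n‖ ≤ C)
    (hlow : ∀ n x, ‖x‖ ≤ C * ‖(T^n) x‖) :
    ∃ A : H →L[𝕜] H, (∀ x y, inner 𝕜 (A (T x)) (T y) = inner 𝕜 (A x) y) ∧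
      (∀ x y, inner 𝕜 (A x) y = inner 𝕜 x (A y)) ∧
      ∀ x, (C⁻¹)^2 * ‖x‖^2 ≤ RCLike.re (inner 𝕜 (A x) x) := by
  obtain ⟨A, hA⟩ := aux_wot (fun n : ℕ => ((n:𝕜)+1)⁻¹ • ∑ j ∈ Finset.range (n+1),
      (ContinuousLinearMap.adjoint (T^j)) * T^j) (C*C)
    (aux_avg_norm _ (C*C) (fun n => (norm_mul_le _ _).trans (by
      rw [LinearIsometryEquiv.norm_map]
      exact mul_le_mul (hC n) (hC n) (norm_nonneg _) hC0.le)))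
  have hform : ∀ (n : ℕ) (x w : H), inner 𝕜 ((((n:𝕜)+1)⁻¹ • ∑ j ∈ Finset.range (n+1),
      (ContinuousLinearMap.adjoint (T^j)) * T^j) x) w
      = ((n:𝕜)+1)⁻¹ * ∑ j ∈ Finset.range (n+1), inner 𝕜 ((T^j) x) ((T^j) w) := by
    intro n x w
    simp [inner_smul_left, sum_inner,
      ContinuousLinearMap.adjoint_inner_left]
  simp only [hform] at hA
  refine ⟨A, fun x y => ?_, fun x y => ?_, fun x => ?_⟩
  · refine sub_eq_zero.1 (tendsto_nhds_unique ((hA (T x) (T y)).sub (hA x y)) ?_)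
    have h2 := aux_cesaro (fun j => inner 𝕜 ((T^j) x) ((T^j) y)) ((C * ‖x‖) * (C * ‖y‖)) (fun n =>
      (norm_inner_le_norm _ _).trans (mul_le_mul (aux_pow_norm hC n x) (aux_pow_norm hC n y)
        (norm_nonneg _) (by positivity)))
    simpa only [pow_succ, mul_apply_eq_comp] using h2
  · rw [← inner_conj_symm x]
    refine tendsto_nhds_unique (hA x y) ?_
    refine ((RCLike.continuous_conj.tendsto _).comp (hA y x)).congr fun n => ?_
    simp [inner_conj_symm]
  · refine ge_of_tendsto ((RCLike.continuous_re.tendsto _).comp (hA x x))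
      (Filter.Eventually.of_forall fun n => ?_)
    have h1 : ((n:𝕜)+1)⁻¹ * ∑ j ∈ Finset.range (n+1), inner 𝕜 ((T^j) x) ((T^j) x)
      = (((((n:ℝ)+1)⁻¹ * ∑ j ∈ Finset.range (n+1), ‖(T^j) x‖^2 : ℝ)) : 𝕜) := by
      push_cast
      simp only [inner_self_eq_norm_sq_to_K]
    simp only [Function.comp_apply]
    rw [h1, RCLike.ofReal_re, le_inv_mul_iff₀ (by positivity)]
    have h2 : ∑ j ∈ Finset.range (n+1), (C⁻¹)^2 * ‖x‖^2 ≤ ∑ j ∈ Finset.range (n+1), ‖(T^j) x‖^2 := by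
      refine Finset.sum_le_sum fun j _ => ?_
      rw [← mul_pow]
      gcongr
      rw [inv_mul_le_iff₀ hC0]
      exact hlow j x
    simpa using h2

theorem aux_sqrt [CompleteSpace H] (B : H →L[𝕜] H) (hsa : IsSelfAdjoint B) (hB : ‖B‖ < 1) :
    ∃ Y : H →L[𝕜] H, IsSelfAdjoint Y ∧ ‖Y‖ < 1 ∧ (1 - Y) * (1 - Y) = 1 - B := by
  obtain ⟨r, hr0, hr1, hr⟩ : ∃ r : ℝ, 0 ≤ r ∧ r < 1 ∧ (‖B‖ + r^2)/2 = r := by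
    refine ⟨1 - √(1-‖B‖), ?_, ?_, ?_⟩
    · have : √(1-‖B‖) ≤ 1 := Real.sqrt_le_one.2 (by linarith [norm_nonneg B])
      linarith
    · have : 0 < √(1-‖B‖) := Real.sqrt_pos.2 (by linarith)
      linarith
    · have := Real.sq_sqrt (show 0 ≤ 1-‖B‖ by linarith)
      nlinarith
  let s : Set (H →L[𝕜] H) := {Y | IsSelfAdjoint Y} ∩ Metric.closedBall 0 r
  have hs : IsComplete s := by
    refine IsClosed.isComplete (IsClosed.inter ?_ Metric.isClosed_closedBall)
    exact isClosed_eq continuous_star continuous_id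
  let f : (H →L[𝕜] H) → (H →L[𝕜] H) := fun Y => (2⁻¹ : 𝕜) • (B + Y * Y)
  have h2 : ‖(2⁻¹ : 𝕜)‖ = 2⁻¹ := by simp
  have hmap : Set.MapsTo f s s := by
    rintro Y ⟨hY, hYr⟩
    rw [mem_closedBall_zero_iff] at hYr
    refine ⟨?_, ?_⟩
    · have hYY : IsSelfAdjoint (Y * Y) := by
        have hY' : star Y = Y := hY
        simp [IsSelfAdjoint, star_mul, hY']
      refine IsSelfAdjoint.smul ?_ (hsa.add hYY)
      simp [IsSelfAdjoint]
    · rw [mem_closedBall_zero_iff]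
      simp only [f]
      rw [norm_smul, h2]
      have := norm_add_le B (Y*Y)
      have h3 := norm_mul_le Y Y
      have h4 : ‖Y‖ * ‖Y‖ ≤ r^2 := by nlinarith [norm_nonneg Y]
      linarith
  have hcon : ContractingWith ⟨r, hr0⟩ (Set.MapsTo.restrict f s s hmap) := by
    refine ⟨by exact_mod_cast hr1, LipschitzWith.of_dist_le_mul ?_⟩
    rintro ⟨Y, hY, hYr⟩ ⟨Z, hZ, hZr⟩
    rw [mem_closedBall_zero_iff] at hYr hZr
    rw [Subtype.dist_eq, Subtype.dist_eq, dist_eq_norm, dist_eq_norm]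
    simp only [Set.MapsTo.val_restrict_apply, f]
    have : (2⁻¹ : 𝕜) • (B + Y * Y) - (2⁻¹ : 𝕜) • (B + Z * Z)
      = (2⁻¹ : 𝕜) • (Y * (Y - Z) + (Y - Z) * Z) := by
      rw [← smul_sub]; congr 1; noncomm_ring
    rw [this, norm_smul, h2]
    have h3 := norm_add_le (Y * (Y - Z)) ((Y - Z) * Z)
    have h4 := norm_mul_le Y (Y-Z)
    have h5 := norm_mul_le (Y-Z) Z
    have h6 := mul_le_mul_of_nonneg_right hYr (norm_nonneg (Y-Z))
    have h7 := mul_le_mul_of_nonneg_right hZr (norm_nonneg (Y-Z))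
    change _ ≤ r * _
    linarith [mul_comm ‖Z‖ ‖Y-Z‖]
  obtain ⟨Y, ⟨hY, hYr⟩, hfix, -⟩ := hcon.exists_fixedPoint' hs hmap
    (x := 0) ⟨by simp, by simpa using hr0⟩ (edist_ne_top _ _)
  rw [mem_closedBall_zero_iff] at hYr
  refine ⟨Y, hY, hYr.trans_lt hr1, ?_⟩
  have h8 : (2⁻¹ : 𝕜) • (B + Y * Y) = Y := hfix
  have h9 : B + Y * Y = Y + Y := by
    rw [← two_smul 𝕜 Y]; nth_rewrite 3 [← h8]; rw [smul_smul]; simp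
  have : B = Y + Y - Y * Y := by rw [← h9]; abel
  rw [this]; noncomm_ring

theorem aux_R [CompleteSpace H] (A : H →L[𝕜] H) (hA : ∀ x y, inner 𝕜 (A x) y = inner 𝕜 x (A y))
    (δ : ℝ) (hδ : 0 < δ) (hlow : ∀ x, δ * ‖x‖^2 ≤ RCLike.re (inner 𝕜 (A x) x)) :
    ∃ (R : H ≃L[𝕜] H) (t : ℝ), ∀ x, ‖R x‖^2 = t * RCLike.re (inner 𝕜 (A x) x) := by
  let t : ℝ := δ / (‖A‖^2 + δ^2)
  have ht : 0 < t := by positivity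
  have ht2 : t * (‖A‖^2 + δ^2) = δ := by simp only [t]; field_simp
  let B : H →L[𝕜] H := 1 - (t:𝕜) • A
  have hBsa : IsSelfAdjoint B := by
    refine IsSelfAdjoint.sub (IsSelfAdjoint.one _) (IsSelfAdjoint.smul ?_ ?_)
    · simp [IsSelfAdjoint]
    · rw [ContinuousLinearMap.isSelfAdjoint_iff_isSymmetric]
      exact hA
  have hq : 0 ≤ 1 - t * δ := by
    have : t * δ ≤ 1 := by
      simp only [t]; rw [div_mul_eq_mul_div, div_le_one (by positivity)]; nlinarith [sq_nonneg ‖A‖]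
    linarith
  have hB : ‖B‖ < 1 := by
    have h1 : ‖B‖ ≤ √(1 - t * δ) := by
      refine ContinuousLinearMap.opNorm_le_bound _ (Real.sqrt_nonneg _) fun x => ?_
      refine le_of_sq_le_sq ?_ (by positivity)
      rw [mul_pow, Real.sq_sqrt hq]
      have h2 : ‖B x‖^2 = ‖x‖^2 - 2 * (t * RCLike.re (inner 𝕜 (A x) x)) + t^2 * ‖A x‖^2 := by
        simp only [B, sub_apply, one_apply_eq_self,
          smul_apply]
        rw [norm_sub_sq (𝕜 := 𝕜), inner_smul_right, RCLike.re_ofReal_mul, ← hA, norm_smul, mul_pow]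
        simp
      have h3 : ‖A x‖^2 ≤ ‖A‖^2 * ‖x‖^2 := by
        rw [← mul_pow]; gcongr; exact A.le_opNorm x
      have h4 := mul_le_mul_of_nonneg_left (hlow x) ht.le
      have h5 := mul_le_mul_of_nonneg_left h3 (sq_nonneg t)
      have h6 : t^2 * (‖A‖^2 * ‖x‖^2) ≤ t * δ * ‖x‖^2 := by
        have : t * ‖A‖^2 ≤ δ := by nlinarith [mul_pos ht (pow_pos hδ 2)]
        have := mul_le_mul_of_nonneg_left this (mul_nonneg ht.le (sq_nonneg ‖x‖))
        nlinarith
      rw [h2]; nlinarith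
    refine h1.trans_lt ?_
    rw [Real.sqrt_lt' one_pos]
    nlinarith [mul_pos ht hδ]
  obtain ⟨Y, hY, hY1, hYB⟩ := aux_sqrt B hBsa hB
  refine ⟨ContinuousLinearEquiv.unitsEquiv 𝕜 H (Units.oneSub Y hY1), t, fun x => ?_⟩
  have hR : (ContinuousLinearEquiv.unitsEquiv 𝕜 H (Units.oneSub Y hY1)) x = (1 - Y) x := rfl
  rw [hR]
  have hYs : IsSelfAdjoint (1 - Y) := (IsSelfAdjoint.one _).sub hY
  have hsym := (ContinuousLinearMap.isSelfAdjoint_iff_isSymmetric.1 hYs)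
  have h1 : inner 𝕜 ((1-Y) x) ((1 - Y) x) = inner 𝕜 (((1-Y) * (1-Y)) x) x :=
    (hsym ((1-Y) x) x).symm
  rw [hYB] at h1
  have h2 := congrArg RCLike.re h1
  rw [inner_self_eq_norm_sq] at h2
  rw [h2]
  simp [B, inner_smul_left]

theorem aux_final [CompleteSpace H] (T : H →L[𝕜] H) (C : ℝ) (hC0 : 0 < C) (hC : ∀ n, ‖T^n‖ ≤ C)
    (hlow : ∀ n x, ‖x‖ ≤ C * ‖(T^n) x‖) (hsurj : Function.Surjective T) :
    ∃ R : H ≃L[𝕜] H, ∃ U : H →L[𝕜] H,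
      (∀ x : H, ‖U x‖ = ‖x‖) ∧ Function.Surjective U ∧
      ∀ x : H, T x = R.symm (U (R x)) := by
  obtain ⟨A, hinv, hsym, hA⟩ := aux_form T C hC0 hC hlow
  obtain ⟨R, t, hR⟩ := aux_R A hsym _ (by positivity) hA
  refine ⟨R, (R : H →L[𝕜] H) ∘L T ∘L (R.symm : H →L[𝕜] H), fun x => ?_, ?_, fun x => by simp⟩
  · have h1 := hR (T (R.symm x))
    have h2 := hR (R.symm x)
    rw [hinv, ← h2, R.apply_symm_apply] at h1
    exact (pow_left_inj₀ (norm_nonneg _) (norm_nonneg _) two_ne_zero).1 h1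
  · exact R.surjective.comp (hsurj.comp R.symm.surjective)

theorem aux_rec [CompleteSpace H] (T : H →L[𝕜] H) (C : ℝ) (hC0 : 0 < C) (hC : ∀ n, ‖T^n‖ ≤ C)
    (hC1 : ∀ z : H, z ≠ 0 → ∃ ε > 0, ∀ n : ℕ, ε ≤ ‖(T^n) z‖) (x : H)
    (hx : TotallyBounded (Set.range fun n : ℕ => (T^n) x)) (m : ℕ) :
    ∃ l : ℕ → ℕ, (∀ j, m ≤ l j) ∧ Tendsto (fun j => (T^(l j)) x) atTop (𝓝 x) := by
  have hK : IsCompact (closure (Set.range fun n : ℕ => (T^n) x)) :=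
    isCompact_iff_totallyBounded_isComplete.2 ⟨hx.closure, isClosed_closure.isComplete⟩
  have hmem : ∀ n : ℕ, (T^n) x ∈ closure (Set.range fun n : ℕ => (T^n) x) :=
    fun n => subset_closure ⟨n, rfl⟩
  obtain ⟨a, -, φ, hφ, ha⟩ := hK.tendsto_subseq hmem
  have hle : ∀ j, m + φ j ≤ φ (m + j) := fun j => hφ.add_le_nat m j
  obtain ⟨w, -, ψ, hψ, hw⟩ := hK.tendsto_subseq (fun j => hmem (φ (m+j) - φ j))
  refine ⟨fun i => φ (m + ψ i) - φ (ψ i), fun j => by have := hle (ψ j); show m ≤ φ (m + ψ j) - φ (ψ j); omega, ?_⟩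
  suffices hz : w - x = 0 by
    have := sub_eq_zero.1 hz
    rw [this] at hw
    exact hw
  by_contra hne
  obtain ⟨ε, hε, hεn⟩ := hC1 _ hne
  have h1 : Tendsto (fun i => C * ‖w - (T^(φ (m + ψ i) - φ (ψ i))) x‖
      + ‖(T^(φ (m + ψ i))) x - (T^(φ (ψ i))) x‖) atTop (𝓝 0) := by
    have e1 : Tendsto (fun i => w - (T^(φ (m + ψ i) - φ (ψ i))) x) atTop (𝓝 0) := by
      simpa using (tendsto_const_nhds (x := w)).sub hw
    have e2 : Tendsto (fun i => (T^(φ (m + ψ i))) x - (T^(φ (ψ i))) x) atTop (𝓝 0) := by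
      have t1 : Tendsto (fun i => m + ψ i) atTop atTop :=
        tendsto_atTop_mono (fun i => Nat.le_add_left _ _) hψ.tendsto_atTop
      simpa using (ha.comp t1).sub (ha.comp hψ.tendsto_atTop)
    simpa using (e1.norm.const_mul C).add e2.norm
  have h2 : ε ≤ 0 := by
    refine ge_of_tendsto h1 (Filter.Eventually.of_forall fun i => (hεn (φ (ψ i))).trans ?_)
    have h3 : (T^(φ (ψ i))) (w - x) = (T^(φ (ψ i))) (w - (T^(φ (m + ψ i) - φ (ψ i))) x)
      + ((T^(φ (m + ψ i))) x - (T^(φ (ψ i))) x) := by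
      have h4 : (T^(φ (ψ i))) ((T^(φ (m + ψ i) - φ (ψ i))) x) = (T^(φ (m + ψ i))) x := by
        rw [← mul_apply_eq_comp, ← pow_add]
        congr 2
        have := hle (ψ i); omega
      rw [map_sub, map_sub, h4]; abel
    rw [h3]
    exact (norm_add_le _ _).trans (add_le_add (aux_pow_norm hC _ _) le_rfl)
  linarith

theorem aux_low [CompleteSpace H] (T : H →L[𝕜] H) (C : ℝ) (hC0 : 0 < C) (hC : ∀ n, ‖T^n‖ ≤ C)
    (hC1 : ∀ z : H, z ≠ 0 → ∃ ε > 0, ∀ n : ℕ, ε ≤ ‖(T^n) z‖) (x : H)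
    (hx : TotallyBounded (Set.range fun n : ℕ => (T^n) x)) (m : ℕ) : ‖x‖ ≤ C * ‖(T^m) x‖ := by
  obtain ⟨l, hl, h⟩ := aux_rec T C hC0 hC hC1 x hx m
  refine le_of_tendsto h.norm (Filter.Eventually.of_forall fun j => ?_)
  rw [← Nat.sub_add_cancel (hl j), pow_add, mul_apply_eq_comp]
  exact aux_pow_norm hC _ _

/-- vectors with totally bounded orbit -/
def auxM (T : H →L[𝕜] H) : Submodule 𝕜 H where
  carrier := {x | TotallyBounded (Set.range fun n : ℕ => (T^n) x)}
  zero_mem' := by simp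
  add_mem' := by
    intro a b ha hb
    refine Metric.totallyBounded_iff.2 fun ε hε => ?_
    obtain ⟨t, ht, hta⟩ := Metric.totallyBounded_iff.1 ha (ε/2) (by positivity)
    obtain ⟨u, hu, hub⟩ := Metric.totallyBounded_iff.1 hb (ε/2) (by positivity)
    refine ⟨Set.image2 (fun p q => p + q) t u, ht.image2 _ hu, ?_⟩
    rintro _ ⟨n, rfl⟩
    have h1 := hta ⟨n, rfl⟩
    have h2 := hub ⟨n, rfl⟩
    simp only [Set.mem_iUnion, Metric.mem_ball, exists_prop] at h1 h2 ⊢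
    obtain ⟨p, hp, hpd⟩ := h1
    obtain ⟨q, hq, hqd⟩ := h2
    refine ⟨p + q, ⟨p, hp, q, hq, rfl⟩, ?_⟩
    rw [map_add]
    exact (dist_add_add_le _ _ _ _).trans_lt (by linarith)
  smul_mem' := by
    intro c a ha
    refine (ha.image (uniformContinuous_const_smul c)).subset ?_
    rintro _ ⟨n, rfl⟩
    exact ⟨_, ⟨n, rfl⟩, by simp⟩

theorem auxM_closed (T : H →L[𝕜] H) (C : ℝ) (hC0 : 0 < C) (hC : ∀ n, ‖T^n‖ ≤ C) :
    IsClosed (auxM T : Set H) := by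
  refine isClosed_of_closure_subset fun x hx => ?_
  rw [Metric.mem_closure_iff] at hx
  change TotallyBounded _
  rw [Metric.totallyBounded_iff]
  intro ε hε
  obtain ⟨y, hy, hxy⟩ := hx (ε/2/C) (by positivity)
  obtain ⟨t, ht, hty⟩ := Metric.totallyBounded_iff.1 hy (ε/2) (by positivity)
  refine ⟨t, ht, ?_⟩
  rintro _ ⟨n, rfl⟩
  have := hty ⟨n, rfl⟩
  simp only [Set.mem_iUnion, Metric.mem_ball, exists_prop] at this ⊢
  obtain ⟨z, hz, hd⟩ := this
  refine ⟨z, hz, (dist_triangle _ ((T^n) y) _).trans_lt ?_⟩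
  have h1 : dist ((T^n) x) ((T^n) y) ≤ C * dist x y := by
    rw [dist_eq_norm, dist_eq_norm, ← map_sub]; exact aux_pow_norm hC _ _
  have h2 : C * dist x y < ε/2 := by
    rw [lt_div_iff₀ hC0] at hxy; linarith
  linarith

theorem auxM_map (T S : H →L[𝕜] H) (hc : Commute T S) (x : H) (hx : x ∈ auxM T) :
    S x ∈ auxM T := by
  refine (TotallyBounded.image hx S.uniformContinuous).subset ?_
  rintro _ ⟨n, rfl⟩
  refine ⟨_, ⟨n, rfl⟩, ?_⟩
  simpa using (congrArg (fun A : H →L[𝕜] H => A x) (hc.pow_left n).eq).symm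

theorem auxM_compact (T K : H →L[𝕜] H) (C : ℝ) (hC : ∀ n, ‖T^n‖ ≤ C)
    (hc : Commute T K) (hK : IsCompactOperator K) (x : H) : K x ∈ auxM T := by
  obtain ⟨Q, hQ, hsub⟩ := IsCompactOperator.image_closedBall_subset_compact
    (f := (K : H →ₗ[𝕜] H)) hK (C * ‖x‖)
  refine hQ.totallyBounded.subset ?_
  rintro _ ⟨n, rfl⟩
  refine hsub ⟨(T^n) x, by simpa using aux_pow_norm hC n x, ?_⟩
  simpa using (congrArg (fun A : H →L[𝕜] H => A x) (hc.pow_left n).eq).symm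

theorem aux_eig (T : H →L[𝕜] H) (α : 𝕜) (x : H) (h : T x = α • x) (n : ℕ) :
    (T^n) x = α^n • x := by
  induction n with
  | zero => simp
  | succ n ih => rw [pow_succ', mul_apply_eq_comp, ih, map_smul, h, smul_smul, pow_succ]

theorem auxM_eig (T : H →L[𝕜] H) (α : 𝕜) (hα : ‖α‖ ≤ 1) (x : H) (h : T x = α • x) :
    x ∈ auxM T := by
  have hQ : IsCompact ((fun c : 𝕜 => c • x) '' Metric.closedBall 0 1) :=
    (isCompact_closedBall _ _).image (by fun_prop)
  refine hQ.totallyBounded.subset ?_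
  rintro _ ⟨n, rfl⟩
  refine ⟨α^n, ?_, (aux_eig T α x h n).symm⟩
  simpa using pow_le_one₀ (norm_nonneg _) hα

/-- circle case -/
theorem aux_circle [CompleteSpace H] (T S : H →L[𝕜] H) (α : 𝕜)
    (hT : T = α • (1 : H →L[𝕜] H) + S) (hα : ‖α‖ = 1) (C : ℝ) (hC0 : 0 < C)
    (hC : ∀ n, ‖T^n‖ ≤ C) (k : ℕ) (hS : IsCompactOperator (S ^ k : H →L[𝕜] H)) :
    auxM T = ⊤ := by
  have hα0 : α ≠ 0 := by rintro rfl; simp at hα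
  have hTx : ∀ x, T x = α • x + S x := fun x => by rw [hT]; simp
  have hcTS : Commute T S := by
    rw [hT]; exact ((Commute.one_left S).smul_left α).add_left (Commute.refl S)
  let P : Submodule 𝕜 H := S.ker ⊔ S.range
  have hP : P.topologicalClosure = ⊤ := by
    rw [Submodule.topologicalClosure_eq_top_iff, Submodule.eq_bot_iff]
    intro y hy
    rw [Submodule.mem_orthogonal] at hy
    refine aux_ergodic (α⁻¹ • T) C (fun n => ?_) y (fun w => ?_) (fun z hz => ?_)
    · rw [smul_pow, norm_smul, norm_pow, norm_inv, hα]; simpa using hC n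
    · have : (α⁻¹ • T) w = w + α⁻¹ • S w := by
        rw [smul_apply, hTx, smul_add, smul_smul, inv_mul_cancel₀ hα0, one_smul]
      rw [this, inner_add_left, inner_smul_left,
        hy (S w) (Submodule.mem_sup_right ⟨w, rfl⟩)]
      simp
    · refine hy z (Submodule.mem_sup_left ?_)
      have h1 : T z = α • z := by
        nth_rewrite 2 [← hz]
        rw [smul_apply, smul_smul, mul_inv_cancel₀ hα0, one_smul]
      rw [hTx] at h1
      simpa using h1
  have hker : ∀ x, S x = 0 → x ∈ auxM T := fun x hx =>
    auxM_eig T α hα.le x (by rw [hTx, hx, add_zero])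
  have hcl := auxM_closed T C hC0 hC
  have key : ∀ j : ℕ, ∀ x, (S^(k - j)) x ∈ auxM T := by
    intro j
    induction j with
    | zero =>
      intro x
      exact auxM_compact T (S^k) C hC (hcTS.pow_right k) hS x
    | succ j ih =>
      intro x
      by_cases hj : k ≤ j
      · rw [show k - (j+1) = k - j by omega]; exact ih x
      have hkj : k - j = (k - (j+1)) + 1 := by omega
      have hxP : x ∈ closure (P : Set H) := by
        rw [← Submodule.topologicalClosure_coe, hP]; trivial
      refine hcl.closure_subset_iff.2 ?_ (map_mem_closure (S^(k-(j+1))).continuous hxP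
        (t := (auxM T : Set H)) ?_)
      · exact subset_rfl
      · intro p hp
        obtain ⟨u, hu, v, ⟨v', rfl⟩, rfl⟩ := Submodule.mem_sup.1 hp
        have hu' : S u = 0 := hu
        rw [map_add]
        refine Submodule.add_mem _ (auxM_map T _ (hcTS.pow_right _) u (hker u hu')) ?_
        have := ih v'
        rw [hkj, pow_succ, mul_apply_eq_comp] at this
        exact this
  rw [Submodule.eq_top_iff']
  intro x
  simpa using key k x

theorem aux_noncircle [CompleteSpace H] (T S : H →L[𝕜] H) (α : 𝕜)
    (hT : T = α • (1 : H →L[𝕜] H) + S) (hα : ‖α‖ ≠ 1) (C : ℝ) (hC0 : 0 < C)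
    (hC : ∀ n, ‖T^n‖ ≤ C)
    (hC1 : ∀ z : H, z ≠ 0 → ∃ ε > 0, ∀ n : ℕ, ε ≤ ‖(T^n) z‖)
    (k : ℕ) (hS : IsCompactOperator (S ^ k : H →L[𝕜] H)) :
    auxM T = ⊤ := by
  have hTx : ∀ x, T x = α • x + S x := fun x => by rw [hT]; simp
  have hcTS : Commute T S := by
    rw [hT]; exact ((Commute.one_left S).smul_left α).add_left (Commute.refl S)
  have hd : 0 < |1 - ‖α‖| := abs_pos.2 (sub_ne_zero.2 hα.symm)
  let c : ℝ := C / |1 - ‖α‖|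
  have hc0 : 0 < c := by positivity
  have hbd : ∀ x ∈ auxM T, ‖x‖ ≤ c * ‖S x‖ := by
    intro x hx
    let p : ℝ := ⨆ n : ℕ, ‖(T^n) x‖
    have hbdd : BddAbove (Set.range fun n : ℕ => ‖(T^n) x‖) :=
      ⟨C * ‖x‖, by rintro _ ⟨n, rfl⟩; exact aux_pow_norm hC n x⟩
    have hp : ∀ n : ℕ, ‖(T^n) x‖ ≤ p := fun n => le_ciSup hbdd n
    have hxp : ‖x‖ ≤ p := by simpa using hp 0
    have hstep : ∀ n : ℕ, (T^(n+1)) x = α • (T^n) x + (T^n) (S x) := by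
      intro n
      rw [pow_succ, mul_apply_eq_comp, hTx, map_add, map_smul]
    have hy : ∀ n : ℕ, ‖(T^n) (S x)‖ ≤ C * ‖S x‖ := fun n => aux_pow_norm hC n _
    suffices h : |1 - ‖α‖| * p ≤ C * ‖S x‖ by
      have : ‖x‖ * |1 - ‖α‖| ≤ C * ‖S x‖ := by nlinarith
      simp only [c]
      rw [div_mul_eq_mul_div, le_div_iff₀ hd]; exact this
    rcases lt_or_gt_of_ne hα with h | h
    · rw [abs_of_pos (by linarith)]
      have h1 : ∀ n : ℕ, ‖(T^(n+1)) x‖ ≤ ‖α‖ * p + C * ‖S x‖ := by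
        intro n
        rw [hstep]
        refine (norm_add_le _ _).trans (add_le_add ?_ (hy n))
        rw [norm_smul]
        exact mul_le_mul_of_nonneg_left (hp n) (norm_nonneg _)
      have h2 : p ≤ ‖α‖ * p + C * ‖S x‖ := by
        refine ciSup_le fun n => ?_
        have hxn : (T^n) x ∈ auxM T := auxM_map T _ (Commute.refl T |>.pow_right n) x hx
        obtain ⟨l, hl, hlim⟩ := aux_rec T C hC0 hC hC1 _ hxn 1
        refine le_of_tendsto hlim.norm (Filter.Eventually.of_forall fun j => ?_)
        rw [← mul_apply_eq_comp, ← pow_add]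
        have := h1 (l j + n - 1)
        rwa [show l j + n - 1 + 1 = l j + n by have := hl j; omega] at this
      linarith
    · rw [abs_of_neg (by linarith)]
      have h1 : ∀ n : ℕ, ‖(T^n) x‖ ≤ (p + C * ‖S x‖) / ‖α‖ := by
        intro n
        rw [le_div_iff₀ (by linarith), mul_comm, ← norm_smul]
        have : α • (T^n) x = (T^(n+1)) x - (T^n) (S x) := by rw [hstep]; abel
        rw [this]
        exact (norm_sub_le _ _).trans (add_le_add (hp _) (hy n))
      have h2 : p ≤ (p + C * ‖S x‖) / ‖α‖ := ciSup_le h1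
      rw [le_div_iff₀ (by linarith)] at h2
      linarith
  have hbdk : ∀ j : ℕ, ∀ x ∈ auxM T, ‖x‖ ≤ c^j * ‖(S^j) x‖ := by
    intro j
    induction j with
    | zero => intro x _; simp
    | succ j ih =>
      intro x hx
      refine (ih x hx).trans ?_
      rw [pow_succ, pow_succ', mul_apply_eq_comp, mul_assoc]
      exact mul_le_mul_of_nonneg_left (hbd _ (auxM_map T _ (hcTS.pow_right j) x hx)) (by positivity)
  have hcl := auxM_closed T C hC0 hC
  have : CompleteSpace (auxM T) := hcl.completeSpace_coe
  have : FiniteDimensional 𝕜 (auxM T) := by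
    let f : auxM T →L[𝕜] H := (S^k) ∘L (auxM T).subtypeL
    have hanti : AntilipschitzWith ⟨c^k, by positivity⟩ f :=
      f.antilipschitz_of_bound fun x => hbdk k x x.2
    have hemb := hanti.isClosedEmbedding f.uniformContinuous
    obtain ⟨Q, hQ, hsub⟩ := IsCompactOperator.image_closedBall_subset_compact
      (f := ((S^k : H →L[𝕜] H) : H →ₗ[𝕜] H)) hS 1
    refine FiniteDimensional.of_isCompact_closedBall₀ 𝕜 one_pos
      ((hemb.isCompact_preimage hQ).of_isClosed_subset Metric.isClosed_closedBall ?_)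
    intro x hx
    exact hsub ⟨x, by simpa using hx, rfl⟩
  have hker : ∀ x, S x = 0 → x = 0 := by
    intro x hx
    have he : T x = α • x := by rw [hTx, hx, add_zero]
    rcases lt_or_gt_of_ne hα with h | h
    · have := hbd x (auxM_eig T α h.le x he)
      rw [hx] at this
      simpa using this
    · by_contra hne
      have hx0 : 0 < ‖x‖ := norm_pos_iff.2 hne
      obtain ⟨n, hn⟩ := pow_unbounded_of_one_lt C h
      have h1 := aux_pow_norm hC n x
      rw [aux_eig T α x he, norm_smul, norm_pow] at h1
      have := le_of_mul_le_mul_right h1 hx0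
      linarith
  have hinj : ∀ j : ℕ, ∀ x, (S^j) x = 0 → x = 0 := by
    intro j
    induction j with
    | zero => intro x hx; simpa using hx
    | succ j ih =>
      intro x hx
      rw [pow_succ, mul_apply_eq_comp] at hx
      exact hker _ (ih _ hx)
  let g : H →ₗ[𝕜] auxM T := ((S^k : H →L[𝕜] H) : H →ₗ[𝕜] H).codRestrict (auxM T)
    (fun x => auxM_compact T (S^k) C hC (hcTS.pow_right k) hS x)
  have hg : Function.Injective g := by
    rw [injective_iff_map_eq_zero]
    intro x hx
    exact hinj k x (congrArg Subtype.val hx)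
  have : FiniteDimensional 𝕜 H := FiniteDimensional.of_injective g hg
  have : ProperSpace H := FiniteDimensional.proper_rclike 𝕜 H
  rw [Submodule.eq_top_iff']
  intro x
  refine (isCompact_closedBall (0:H) (C * ‖x‖)).totallyBounded.subset ?_
  rintro _ ⟨n, rfl⟩
  simpa using aux_pow_norm hC n x

end aux

/-- Let `H` be a Hilbert space over `𝕜` (`ℝ` or `ℂ`) and let `T = α·I + S`
be power-bounded with `S^k` compact for some `k ≥ 1`. If `inf_n ‖Tⁿ x‖ > 0` for every
`x ≠ 0`, then `T` is similar to a unitary operator: `T = R⁻¹ ∘ U ∘ R` for some invertible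
bounded operator `R` and surjective linear isometry `U` of `H`. -/
theorem similar_to_unitary_of_powerBounded_scalar_plus_compact_power
    {𝕜 : Type*} [RCLike 𝕜] {H : Type*} [NormedAddCommGroup H] [InnerProductSpace 𝕜 H]
    [CompleteSpace H]
    (α : 𝕜) (S : H →L[𝕜] H) (k : ℕ) (hk : 1 ≤ k)
    (hS : IsCompactOperator (S ^ k : H →L[𝕜] H))
    (T : H →L[𝕜] H) (hT : T = α • (1 : H →L[𝕜] H) + S)
    (hpb : ∃ C : ℝ, ∀ n : ℕ, ‖T ^ n‖ ≤ C)
    (hinf : ∀ x : H, x ≠ 0 → 0 < ⨅ n : ℕ, ‖(T ^ n) x‖) :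
    ∃ R : H ≃L[𝕜] H, ∃ U : H →L[𝕜] H,
      (∀ x : H, ‖U x‖ = ‖x‖) ∧ Function.Surjective U ∧
      ∀ x : H, T x = R.symm (U (R x)) := by
  classical
  obtain ⟨C₀, hC₀⟩ := hpb
  let C : ℝ := max C₀ 1
  have hC0 : 0 < C := lt_of_lt_of_le one_pos (le_max_right _ _)
  have hC : ∀ n, ‖T^n‖ ≤ C := fun n => (hC₀ n).trans (le_max_left _ _)
  have hC1 : ∀ z : H, z ≠ 0 → ∃ ε > 0, ∀ n : ℕ, ε ≤ ‖(T^n) z‖ := fun z hz =>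
    ⟨_, hinf z hz, fun n => ciInf_le ⟨0, by rintro _ ⟨n, rfl⟩; exact norm_nonneg _⟩ n⟩
  have hM : auxM T = ⊤ := by
    by_cases hα : ‖α‖ = 1
    · exact aux_circle T S α hT hα C hC0 hC k hS
    · exact aux_noncircle T S α hT hα C hC0 hC hC1 k hS
  have hMx : ∀ x : H, TotallyBounded (Set.range fun n : ℕ => (T^n) x) := fun x => by
    have : x ∈ auxM T := by rw [hM]; trivial
    exact this
  have hlow : ∀ n x, ‖x‖ ≤ C * ‖(T^n) x‖ := fun n x => aux_low T C hC0 hC hC1 x (hMx x) n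
  refine aux_final T C hC0 hC hlow ?_
  have hanti : AntilipschitzWith ⟨C, hC0.le⟩ T :=
    T.antilipschitz_of_bound fun x => by have := hlow 1 x; rw [pow_one] at this; exact this
  have hcl : IsClosed (Set.range T) := (hanti.isClosedEmbedding T.uniformContinuous).isClosed_range
  intro x
  obtain ⟨l, hl, hlim⟩ := aux_rec T C hC0 hC hC1 x (hMx x) 1
  refine hcl.mem_of_tendsto hlim (Filter.Eventually.of_forall fun j => ?_)
  refine ⟨(T^(l j - 1)) x, ?_⟩
  rw [← mul_apply_eq_comp, ← pow_succ', Nat.sub_add_cancel (hl j)]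
end

section
/- Let X be a reflexive Banach space over 𝕜 (𝕜 = ℝ or ℂ), let T be a power-bounded operator on X, and let E : X → X be a bounded operator such that (1/n) ∑_{k=1}^n T^k x → E x in norm for every x ∈ X. Then the adjoint averages converge: (1/n) ∑_{k=1}^n T*^k x* → E* x* in norm for every x* ∈ X*, where E* is the adjoint of E. -/
open Filter Finset

/-- The Banach-space adjoint of `T`, acting on the dual space: `T* f = f ∘ T`. -/
noncomputable def banachAdjoint {𝕜 : Type*} [RCLike 𝕜] {X : Type*} [NormedAddCommGroup X]
    [NormedSpace 𝕜 X] (T : X →L[𝕜] X) :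
    StrongDual 𝕜 X →L[𝕜] StrongDual 𝕜 X :=
  (ContinuousLinearMap.compL 𝕜 X X 𝕜).flip T


theorem aux_pow {𝕜 : Type*} [RCLike 𝕜] {X : Type*} [NormedAddCommGroup X]
    [NormedSpace 𝕜 X] (T : X →L[𝕜] X) (k : ℕ) (f : StrongDual 𝕜 X) :
    (banachAdjoint T ^ k) f = f.comp (T ^ k) := by
  induction k generalizing f with
  | zero => ext x; simp
  | succ k ih =>
    rw [pow_succ, mul_apply_eq_comp, ih, pow_succ']
    rfl

theorem aux_tele {𝕜 : Type*} [RCLike 𝕜] {V : Type*} [NormedAddCommGroup V]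
    [NormedSpace 𝕜 V] (S : V →L[𝕜] V) (C : ℝ) (hC : ∀ (n : ℕ) (v : V), ‖(S ^ n) v‖ ≤ C * ‖v‖)
    (h : V) :
    Tendsto (fun n : ℕ => (n : 𝕜)⁻¹ • ∑ k ∈ Icc 1 n, (S ^ k) (S h - h)) atTop (nhds 0) := by
  have key : ∀ n : ℕ, ∑ k ∈ Icc 1 n, (S ^ k) (S h - h) = (S ^ (n + 1)) h - S h := by
    intro n
    induction n with
    | zero => simp
    | succ n ih =>
      rw [Finset.sum_Icc_succ_top (by omega), ih, map_sub, pow_succ S (n + 1),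
        mul_apply_eq_comp]
      abel
  have h1 : Tendsto (fun n : ℕ => (n : ℝ)⁻¹ * (C * ‖h‖ + ‖S h‖)) atTop (nhds 0) := by
    simpa using (tendsto_inv_atTop_nhds_zero_nat (𝕜 := ℝ)).mul_const (C * ‖h‖ + ‖S h‖)
  refine squeeze_zero_norm (fun n => ?_) h1
  rw [key, norm_smul, norm_inv, RCLike.norm_natCast]
  gcongr
  exact (norm_sub_le _ _).trans (by gcongr; exact hC _ _)

theorem aux_closure {𝕜 : Type*} [RCLike 𝕜] {V : Type*} [NormedAddCommGroup V]
    [NormedSpace 𝕜 V] (S : V →L[𝕜] V) (C : ℝ) (hC : ∀ (n : ℕ) (v : V), ‖(S ^ n) v‖ ≤ C * ‖v‖)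
    (g : V) (hg : g ∈ closure (Set.range fun h => S h - h)) :
    Tendsto (fun n : ℕ => (n : 𝕜)⁻¹ • ∑ k ∈ Icc 1 n, (S ^ k) g) atTop (nhds 0) := by
  have bd : ∀ (n : ℕ) (v : V), ‖(n : 𝕜)⁻¹ • ∑ k ∈ Icc 1 n, (S ^ k) v‖ ≤ C * ‖v‖ := by
    intro n v
    have h0 : 0 ≤ C * ‖v‖ := (norm_nonneg _).trans (hC 0 v)
    rw [norm_smul, norm_inv, RCLike.norm_natCast]
    have : ‖∑ k ∈ Icc 1 n, (S ^ k) v‖ ≤ n * (C * ‖v‖) := by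
      refine (norm_sum_le_of_le _ (fun k _ => hC k v)).trans ?_
      simp
    rcases Nat.eq_zero_or_pos n with rfl | hn
    · simpa using h0
    · have hn' : (0 : ℝ) < n := by exact_mod_cast hn
      rw [inv_mul_le_iff₀ hn']
      exact this
  rw [Metric.tendsto_atTop]
  intro ε hε
  obtain ⟨_, ⟨h, rfl⟩, hd⟩ := Metric.mem_closure_iff.1 hg (ε / (2 * (|C| + 1))) (by positivity)
  obtain ⟨N, hN⟩ := Metric.tendsto_atTop.1 (aux_tele (𝕜 := 𝕜) S C hC h) (ε / 2) (by positivity)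
  refine ⟨N, fun n hn => ?_⟩
  have h1 := hN n hn
  have h2 := bd n (g - (S h - h))
  rw [dist_zero_right] at h1 ⊢
  rw [dist_eq_norm] at hd
  have h3 : C * ‖g - (S h - h)‖ ≤ ε / 2 := by
    rw [lt_div_iff₀ (by positivity)] at hd
    nlinarith [le_abs_self C, norm_nonneg (g - (S h - h))]
  have h4 : (n : 𝕜)⁻¹ • ∑ k ∈ Icc 1 n, (S ^ k) g
      = (n : 𝕜)⁻¹ • ∑ k ∈ Icc 1 n, (S ^ k) (g - (S h - h))
        + (n : 𝕜)⁻¹ • ∑ k ∈ Icc 1 n, (S ^ k) (S h - h) := by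
    rw [← smul_add, ← Finset.sum_add_distrib]
    simp only [← map_add, sub_add_cancel]
  rw [h4]
  refine (norm_add_le _ _).trans_lt ?_
  linarith

theorem aux_fixed {𝕜 : Type*} [RCLike 𝕜] {V : Type*} [NormedAddCommGroup V]
    [NormedSpace 𝕜 V] (S : V →L[𝕜] V) (v : V) (hv : S v = v) :
    Tendsto (fun n : ℕ => (n : 𝕜)⁻¹ • ∑ k ∈ Icc 1 n, (S ^ k) v) atTop (nhds v) := by
  have hk : ∀ k : ℕ, (S ^ k) v = v := by
    intro k
    induction k with
    | zero => simp
    | succ k ih => rw [pow_succ, mul_apply_eq_comp, hv, ih]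
  refine tendsto_const_nhds.congr' ?_
  filter_upwards [eventually_gt_atTop 0] with n hn
  have : (n : 𝕜) ≠ 0 := by exact_mod_cast hn.ne'
  simp only [hk, Finset.sum_const, Nat.card_Icc, Nat.add_sub_cancel]
  rw [← Nat.cast_smul_eq_nsmul 𝕜, smul_smul, inv_mul_cancel₀ this, one_smul]

theorem aux_hb {𝕜 : Type*} [RCLike 𝕜] {V : Type*} [NormedAddCommGroup V]
    [NormedSpace 𝕜 V] (M : Submodule 𝕜 V) (hM : IsClosed (M : Set V)) (v : V)
    (h : ∀ φ : StrongDual 𝕜 V, (∀ m ∈ M, φ m = 0) → φ v = 0) : v ∈ M := by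
  haveI : IsClosed (M : Set V) := hM
  rw [← Submodule.Quotient.mk_eq_zero]
  rw [NormedSpace.eq_zero_iff_forall_dual_eq_zero 𝕜]
  intro φ
  refine h (φ.comp M.mkQL) (fun m hm => ?_)
  have : M.mkQL m = 0 := (Submodule.Quotient.mk_eq_zero M).2 hm
  simp [this]

/-- Let `X` be a reflexive Banach space over `𝕜` (`ℝ` or `ℂ`), `T`
power-bounded with ergodic projection `E` (the strong limit of the Cesàro averages of `T`).
Then the Cesàro averages of the adjoint `T*` converge in norm to `E* x*` for every
`x* ∈ X*`. -/
theorem adjoint_cesaro_converges {𝕜 : Type*} [RCLike 𝕜]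
    {X : Type*} [NormedAddCommGroup X] [NormedSpace 𝕜 X] [CompleteSpace X]
    (hrefl : Function.Bijective (NormedSpace.inclusionInDoubleDual 𝕜 X))
    (T : X →L[𝕜] X) (hpb : ∃ C : ℝ, ∀ n : ℕ, ‖T ^ n‖ ≤ C)
    (E : X →L[𝕜] X)
    (hE : ∀ x : X, Tendsto (fun n : ℕ => (n : 𝕜)⁻¹ • ∑ k ∈ Icc 1 n, (T ^ k) x)
      atTop (nhds (E x))) :
    ∀ f : StrongDual 𝕜 X,
      Tendsto (fun n : ℕ => (n : 𝕜)⁻¹ • ∑ k ∈ Icc 1 n, (banachAdjoint T ^ k) f)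
        atTop (nhds (banachAdjoint E f)) := by
  intro f
  obtain ⟨C, hC⟩ := hpb
  have hS : ∀ (n : ℕ) (g : StrongDual 𝕜 X), ‖(banachAdjoint T ^ n) g‖ ≤ C * ‖g‖ := by
    intro n g
    rw [aux_pow, mul_comm]
    exact (g.opNorm_comp_le _).trans (by gcongr; exact hC n)
  have hT : ∀ (n : ℕ) (v : X), ‖(T ^ n) v‖ ≤ C * ‖v‖ := fun n v =>
    (T ^ n).le_of_opNorm_le (hC n) v
  have hET : ∀ x, E (T x) = E x := by
    intro x
    have := tendsto_nhds_unique (hE (T x - x)) (aux_tele (𝕜 := 𝕜) T C hT x)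
    rwa [map_sub, sub_eq_zero] at this
  have hfix : banachAdjoint T (banachAdjoint E f) = banachAdjoint E f := by
    ext x
    exact congrArg f (hET x)
  let D : StrongDual 𝕜 X →L[𝕜] StrongDual 𝕜 X := banachAdjoint T - 1
  have hmem : f - banachAdjoint E f ∈ D.range.topologicalClosure := by
    refine aux_hb (𝕜 := 𝕜) _ (Submodule.isClosed_topologicalClosure _) _ fun φ hφ => ?_
    obtain ⟨x, rfl⟩ := hrefl.2 φ
    have hx : T x = x := by
      rw [NormedSpace.eq_iff_forall_dual_eq 𝕜]
      intro g
      have := hφ (D g) (Submodule.le_topologicalClosure _ ⟨g, rfl⟩)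
      exact sub_eq_zero.1 this
    have hEx : E x = x := tendsto_nhds_unique (hE x) (aux_fixed (𝕜 := 𝕜) T x hx)
    change f x - f (E x) = 0
    rw [hEx, sub_self]
  have hcl : f - banachAdjoint E f ∈ closure (Set.range fun h => banachAdjoint T h - h) := hmem
  have h1 := (aux_closure (𝕜 := 𝕜) _ C hS _ hcl).add (aux_fixed (𝕜 := 𝕜) _ _ hfix)
  rw [zero_add] at h1
  refine h1.congr fun n => ?_
  rw [← smul_add, ← Finset.sum_add_distrib]
  simp only [← map_add, sub_add_cancel]
end

section
/- Let T be a power-bounded operator on a reflexive complex Banach space X, and let λ ∈ ℂ with |λ| = 1. Then λ is an eigenvalue of T (there exists x ≠ 0 with T x = λ x) if and only if λ is an eigenvalue of the adjoint T* (there exists x* ≠ 0 in X* with T* x* = λ x*). -/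
theorem adjoint_eigen_aux
    {X : Type*} [NormedAddCommGroup X] [NormedSpace ℂ X]
    (T : X →L[ℂ] X) (hpb : ∃ C : ℝ, ∀ n : ℕ, ‖T ^ n‖ ≤ C)
    (lam : ℂ) (hlam : ‖lam‖ = 1) (x : X) (hx : x ≠ 0) (hT : T x = lam • x) :
    ∃ f : StrongDual ℂ X, f ≠ 0 ∧ banachAdjoint T f = lam • f := by
  obtain ⟨C, hC⟩ := hpb
  have hC0 : 0 ≤ C := (norm_nonneg _).trans (hC 0)
  have hl0 : lam ≠ 0 := by
    rintro rfl
    simp at hlam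
  obtain ⟨g, -, hg⟩ := exists_dual_vector ℂ x (norm_ne_zero_iff.mpr hx)
  have hgx : g x ≠ 0 := by
    rw [hg]; simpa using hx
  let v : ℕ → StrongDual ℂ X := fun n => (lam⁻¹) ^ n • g.comp (T ^ n)
  have hv : ∀ n, ‖v n‖ ≤ ‖g‖ * C := fun n => by
    simp only [v, norm_smul, norm_pow, norm_inv, hlam, inv_one, one_pow, one_mul]
    exact (ContinuousLinearMap.opNorm_comp_le _ _).trans
      (mul_le_mul_of_nonneg_left (hC n) (norm_nonneg _))
  let a : ℕ → StrongDual ℂ X := fun N => ((N : ℂ) + 1)⁻¹ • ∑ n ∈ Finset.range (N + 1), v n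
  have hN : ∀ N : ℕ, ‖((N : ℂ) + 1)⁻¹‖ = ((N : ℝ) + 1)⁻¹ := fun N => by
    rw [norm_inv]
    congr 1
    exact_mod_cast Complex.norm_natCast (N + 1)
  have ha : ∀ N, ‖a N‖ ≤ ‖g‖ * C := fun N => by
    simp only [a, norm_smul, hN]
    have h1 : ‖∑ n ∈ Finset.range (N + 1), v n‖ ≤ ((N : ℝ) + 1) * (‖g‖ * C) := by
      refine (norm_sum_le_of_le _ (fun n _ => hv n)).trans ?_
      simp
    rw [inv_mul_le_iff₀ (by positivity)]
    exact h1
  let U : Ultrafilter ℕ := Filter.hyperfilter ℕ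
  have hU : (U : Filter ℕ) ≤ Filter.atTop := by
    rw [← Nat.cofinite_eq_atTop]; exact Filter.hyperfilter_le_cofinite
  have hcomp := WeakDual.isCompact_closedBall (𝕜 := ℂ) (E := X) 0 (‖g‖ * C)
  obtain ⟨f', -, hf'⟩ := hcomp.ultrafilter_le_nhds (U.map (fun N => StrongDual.toWeakDual (a N)))
    (by
      rw [Filter.le_principal_iff]
      change ∀ᶠ N in (U : Filter ℕ), _
      refine Filter.Eventually.of_forall (fun N => ?_)
      simpa using ha N)
  have hlim : ∀ y, Filter.Tendsto (fun N => a N y) U (nhds (WeakDual.toStrongDual f' y)) := fun y =>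
    ((WeakDual.eval_continuous (𝕜 := ℂ) y).tendsto f').comp hf'
  have hTn : ∀ n : ℕ, (T ^ n) x = lam ^ n • x := fun n => by
    induction n with
    | zero => simp
    | succ k ih => rw [pow_succ, mul_apply_eq_comp, hT, map_smul, ih, smul_smul, pow_succ, mul_comm]
  refine ⟨WeakDual.toStrongDual f', ?_, ?_⟩
  · intro h0
    have h1 := hlim x
    have h2 : ∀ N, a N x = g x := fun N => by
      have h3 : ∀ n, v n x = g x := fun n => by
        simp only [v, smul_apply, ContinuousLinearMap.comp_apply, hTn, map_smul,
          smul_smul, ← mul_pow, inv_mul_cancel₀ hl0, one_pow, one_smul]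
      have h4 : (N : ℂ) + 1 ≠ 0 := by exact_mod_cast Nat.succ_ne_zero N
      simp only [a, smul_apply, sum_apply, h3]
      simp [h4]
    simp only [h2, h0] at h1
    exact hgx (tendsto_nhds_unique tendsto_const_nhds h1)
  · ext y
    change WeakDual.toStrongDual f' (T y) = lam • WeakDual.toStrongDual f' y
    have h1 := (hlim (T y)).sub ((hlim y).const_smul lam)
    have key : ∀ N, a N (T y) - lam • a N y = ((N : ℂ) + 1)⁻¹ * (lam * (v (N + 1) y - v 0 y)) := fun N => by
      have h3 : ∀ n, v n (T y) = lam * v (n + 1) y := fun n => by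
        simp only [v, smul_apply, ContinuousLinearMap.comp_apply, smul_eq_mul,
          pow_succ, mul_apply_eq_comp]
        field_simp
      rw [← Finset.sum_range_sub (fun n => v n y)]
      simp only [a, smul_apply, sum_apply, h3, smul_eq_mul,
        Finset.sum_sub_distrib, ← Finset.mul_sum]
      ring
    have h0 : Filter.Tendsto (fun N => a N (T y) - lam • a N y) Filter.atTop (nhds 0) := by
      refine squeeze_zero_norm (a := fun N : ℕ => (1 / ((N : ℝ) + 1)) * (2 * (‖g‖ * C * ‖y‖))) (fun N => ?_) ?_
      · rw [key, norm_mul, norm_mul, hN, hlam, one_mul, one_div]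
        refine mul_le_mul_of_nonneg_left ?_ (by positivity)
        have b1 := (v (N+1)).le_of_opNorm_le (hv _) y
        have b2 := (v 0).le_of_opNorm_le (hv _) y
        linarith [norm_sub_le (v (N+1) y) (v 0 y)]
      · simpa using (tendsto_one_div_add_atTop_nhds_zero_nat (𝕜 := ℝ)).mul_const (2 * (‖g‖ * C * ‖y‖))
    exact sub_eq_zero.mp (tendsto_nhds_unique h1 (h0.mono_left hU))


set_option synthInstance.maxHeartbeats 400000 in
theorem banachAdjoint_pow_aux {X : Type*} [NormedAddCommGroup X] [NormedSpace ℂ X]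
    (T : X →L[ℂ] X) (n : ℕ) (g : StrongDual ℂ X) :
    (banachAdjoint T ^ n) g = g.comp (T ^ n) := by
  induction n generalizing g with
  | zero => ext y; simp
  | succ k ih =>
    rw [pow_succ, mul_apply_eq_comp, ih, pow_succ']
    rfl

set_option synthInstance.maxHeartbeats 400000 in
/-- Let `T` be a power-bounded operator on a reflexive complex Banach
space `X` and let `λ ∈ ℂ` with `|λ| = 1`. Then `λ` is an eigenvalue of `T` if and only if
`λ` is an eigenvalue of the adjoint `T*`. -/
theorem unimodular_eigenvalue_iff_adjoint_eigenvalue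
    {X : Type*} [NormedAddCommGroup X] [NormedSpace ℂ X] [CompleteSpace X]
    (hrefl : Function.Bijective (NormedSpace.inclusionInDoubleDual ℂ X))
    (T : X →L[ℂ] X) (hpb : ∃ C : ℝ, ∀ n : ℕ, ‖T ^ n‖ ≤ C)
    (lam : ℂ) (hlam : ‖lam‖ = 1) :
    (∃ x : X, x ≠ 0 ∧ T x = lam • x) ↔
    (∃ f : StrongDual ℂ X, f ≠ 0 ∧ banachAdjoint T f = lam • f) := by
  constructor
  · rintro ⟨x, hx, hT⟩
    exact adjoint_eigen_aux T hpb lam hlam x hx hT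
  · rintro ⟨f, hf, hT⟩
    obtain ⟨C, hC⟩ := hpb
    have hC0 : 0 ≤ C := (norm_nonneg _).trans (hC 0)
    obtain ⟨φ, hφ, hφT⟩ := adjoint_eigen_aux (banachAdjoint T)
      ⟨C, fun n => ContinuousLinearMap.opNorm_le_bound _ hC0 (fun g => by
        rw [banachAdjoint_pow_aux, mul_comm]
        exact (ContinuousLinearMap.opNorm_comp_le _ _).trans
          (mul_le_mul_of_nonneg_left (hC n) (norm_nonneg _)))⟩ lam hlam f hf hT
    obtain ⟨x, rfl⟩ := hrefl.2 φ
    refine ⟨x, ?_, ?_⟩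
    · rintro rfl
      exact hφ (map_zero _)
    · apply hrefl.1
      rw [map_smul, ← hφT]
      rfl
end
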